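/- For every real x and every v > 0, it holds that φ(x + v)·Φ(x) + v·Φ(x + v)·Φ(x) - φ(x)·Φ(x + v) > 0. (This inequality shows that in the Black-Scholes model the quantity k·c'(k)² - c(k)·c'(k) - k·c(k)·c''(k) is positive, where c is the normalized Black-Scholes Call price; hence the function S ↦ C(S,K)/(-∂_K C(S,K)) is monotone and the lifted Call-on-Call pricing function exists.) -/

import Mathlib

open MeasureTheory

/-- The standard normal probability density function. -/
noncomputable def phi (x : ℝ) : ℝ := Real.exp (-x ^ 2 / 2) / Real.sqrt (2 * Real.pi)

/-- The standard normal cumulative distribution function. -/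
noncomputable def Phi (x : ℝ) : ℝ := ∫ t in Set.Iic x, phi t

lemma phi_pos (x : ℝ) : 0 < phi x := by unfold phi; positivity

lemma phi_deriv (x : ℝ) : HasDerivAt phi (-x * phi x) x := by
  unfold phi
  have h : HasDerivAt (fun x : ℝ => -x ^ 2 / 2) (-x) x := by
    have := ((hasDerivAt_pow 2 x).neg).div_const 2
    refine this.congr_deriv ?_
    norm_num
    ring
  refine ((h.exp).div_const _).congr_deriv ?_
  ring

lemma phi_cont : Continuous phi := by unfold phi; fun_prop

lemma phi_int : Integrable phi := by
  have := (integrable_exp_neg_mul_sq (b := 1/2) (by norm_num)).div_const (Real.sqrt (2 * Real.pi))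
  convert this using 1
  ext x; unfold phi; congr 2; ring

lemma Phi_deriv (x : ℝ) : HasDerivAt Phi (phi x) x := by
  have h : Phi = fun x => Phi 0 + ∫ t in (0:ℝ)..x, phi t := by
    ext y
    rw [← intervalIntegral.integral_Iic_sub_Iic phi_int.integrableOn phi_int.integrableOn]
    unfold Phi; ring
  rw [h]
  exact (intervalIntegral.integral_hasDerivAt_right phi_int.intervalIntegrable
    (phi_cont.stronglyMeasurableAtFilter _ _) phi_cont.continuousAt).const_add _

lemma Phi_lim : Filter.Tendsto Phi Filter.atBot (nhds 0) := by
  have h : Phi = fun x => Phi 0 - ∫ t in x..(0:ℝ), phi t := by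
    ext y
    rw [← intervalIntegral.integral_Iic_sub_Iic phi_int.integrableOn phi_int.integrableOn]
    unfold Phi; ring
  have h2 := (intervalIntegral_tendsto_integral_Iic (0:ℝ) phi_int.integrableOn
    Filter.tendsto_id).const_sub (Phi 0)
  rw [h]
  have e : Phi 0 - ∫ x in Set.Iic 0, phi x = 0 := sub_self _
  rw [e] at h2
  exact h2

lemma phi_lim : Filter.Tendsto phi Filter.atBot (nhds 0) := by
  have h : Filter.Tendsto (fun x : ℝ => -x ^ 2 / 2) Filter.atBot Filter.atBot := by
    have h0 : Filter.Tendsto (fun x : ℝ => x ^ 2) Filter.atBot Filter.atTop := by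
      have := (Filter.tendsto_pow_atTop (α := ℝ) (n := 2) (by norm_num)).comp
        Filter.tendsto_neg_atBot_atTop
      refine this.congr fun x => by simp
    exact (Filter.tendsto_neg_atTop_atBot.comp h0).atBot_div_const (by norm_num)
  have := (Real.tendsto_exp_atBot.comp h).div_const (Real.sqrt (2 * Real.pi))
  rw [zero_div] at this
  exact this

lemma pos_of_deriv {f f' : ℝ → ℝ} (hd : ∀ x, HasDerivAt f (f' x) x) (hp : ∀ x, 0 < f' x)
    (hl : Filter.Tendsto f Filter.atBot (nhds 0)) (x : ℝ) : 0 < f x := by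
  have hm : StrictMono f := strictMono_of_deriv_pos fun x => by rw [(hd x).deriv]; exact hp x
  have h1 : 0 ≤ f (x - 1) := hm.monotone.le_of_tendsto hl _
  exact h1.trans_lt (hm (by linarith))

lemma Phi_pos (x : ℝ) : 0 < Phi x := pos_of_deriv Phi_deriv phi_pos Phi_lim x

lemma mul_phi_bound (x : ℝ) : |x * phi x| ≤ 1 / Real.sqrt (2 * Real.pi) := by
  unfold phi
  rw [← mul_div_assoc, abs_div, abs_of_nonneg (Real.sqrt_nonneg _)]
  gcongr
  rw [abs_mul, abs_of_pos (Real.exp_pos _), neg_div, Real.exp_neg, ← div_eq_mul_inv,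
    div_le_one (Real.exp_pos _)]
  have := Real.add_one_le_exp (x ^ 2 / 2)
  nlinarith [sq_nonneg (|x| - 1), sq_abs x]

lemma K_pos (x : ℝ) : 0 < Phi x + phi x * (x / (1 + x ^ 2)) := by
  refine pos_of_deriv (f := fun x => Phi x + phi x * (x / (1 + x ^ 2)))
    (f' := fun x => phi x * (2 / (1 + x ^ 2) ^ 2)) (fun x => ?_) (fun x => ?_) ?_ x
  · have hne : 1 + x ^ 2 ≠ 0 := by positivity
    have h := (hasDerivAt_id x).div (((hasDerivAt_pow 2 x)).const_add 1) hne
    have := (Phi_deriv x).add ((phi_deriv x).mul h)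
    refine this.congr_deriv ?_
    simp only [id, Pi.div_apply]
    field_simp
    push_cast
    ring
  · have := phi_pos x
    positivity
  · have : Filter.Tendsto (fun x => phi x * (x / (1 + x ^ 2))) Filter.atBot (nhds 0) := by
      refine squeeze_zero_norm (fun x => ?_) phi_lim
      rw [Real.norm_eq_abs, abs_mul, abs_of_pos (phi_pos x)]
      refine mul_le_of_le_one_right (phi_pos x).le ?_
      have h1 : (0:ℝ) < 1 + x ^ 2 := by positivity
      rw [abs_div, abs_of_pos h1, div_le_one h1]
      nlinarith [sq_nonneg (|x| - 1), sq_abs x]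
    simpa using Phi_lim.add this

lemma G_pos (x : ℝ) : 0 < Phi x ^ 2 - x * phi x * Phi x - phi x ^ 2 := by
  refine pos_of_deriv (f := fun x => Phi x ^ 2 - x * phi x * Phi x - phi x ^ 2)
    (f' := fun x => phi x * ((1 + x ^ 2) * (Phi x + phi x * (x / (1 + x ^ 2)))))
    (fun x => ?_) (fun x => ?_) ?_ x
  · have hne : 1 + x ^ 2 ≠ 0 := by positivity
    have := (((Phi_deriv x).pow 2).sub
      (((hasDerivAt_id x).mul (phi_deriv x)).mul (Phi_deriv x))).sub ((phi_deriv x).pow 2)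
    refine this.congr_deriv ?_
    simp only [id, Pi.mul_apply]
    field_simp
    push_cast
    ring
  · have := phi_pos x
    have := K_pos x
    positivity
  · have : Filter.Tendsto (fun x => x * phi x * Phi x) Filter.atBot (nhds 0) := by
      have h := Phi_lim.const_mul (1 / Real.sqrt (2 * Real.pi))
      rw [mul_zero] at h
      refine squeeze_zero_norm (fun x => ?_) h
      rw [Real.norm_eq_abs, abs_mul, abs_of_pos (Phi_pos x)]
      exact mul_le_mul_of_nonneg_right (mul_phi_bound x) (Phi_pos x).le
    simpa using ((Phi_lim.pow 2).sub this).sub (phi_lim.pow 2)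

lemma g_mono : StrictMono fun x => x + phi x / Phi x := by
  refine strictMono_of_deriv_pos fun x => ?_
  have hP := Phi_pos x
  have := (hasDerivAt_id x).add ((phi_deriv x).div (Phi_deriv x) hP.ne')
  have h2 : HasDerivAt (fun x => x + phi x / Phi x)
      ((Phi x ^ 2 - x * phi x * Phi x - phi x ^ 2) / Phi x ^ 2) x := by
    refine this.congr_deriv ?_
    field_simp
    ring
  rw [h2.deriv]
  have := G_pos x
  positivity

/-- For every real `x` and every `v > 0`,
`φ(x + v)·Φ(x) + v·Φ(x + v)·Φ(x) - φ(x)·Φ(x + v) > 0`; this inequality guarantees the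
existence of the lifted Call-on-Call pricing function in the Black-Scholes model. -/
theorem bs_lifted_existence_inequality (x v : ℝ) (hv : 0 < v) :
    0 < phi (x + v) * Phi x + v * Phi (x + v) * Phi x - phi x * Phi (x + v) := by
  have h := g_mono (show x < x + v by linarith)
  have h1 := Phi_pos x
  have h2 := Phi_pos (x + v)
  simp only at h
  have h3 : 0 < (v + phi (x + v) / Phi (x + v) - phi x / Phi x) * (Phi x * Phi (x + v)) :=
    mul_pos (by linarith) (mul_pos h1 h2)
  have e : (v + phi (x + v) / Phi (x + v) - phi x / Phi x) * (Phi x * Phi (x + v)) =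
      phi (x + v) * Phi x + v * Phi (x + v) * Phi x - phi x * Phi (x + v) := by
    field_simp
    ring
  rwa [e] at h3
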